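/- Let k ≥ 2, λ ⊢ kp, and set ε_1(λ) := Σ_{μ ⊢ p} (1/z_μ) · χ^λ_{kμ}. Then ε_1(λ) ≠ 0 if and only if λ has at most k nonzero parts, λ_1 ≥ … ≥ λ_k ≥ 0, and the k numbers λ_i + k − i (1 ≤ i ≤ k) have k pairwise distinct residues modulo k. In that case, ε_1(λ) equals the sign of the unique permutation τ ∈ S_k satisfying λ_{τ(i)} + k − τ(i) ≡ k − i (mod k) for all 1 ≤ i ≤ k. -/

import Mathlib

open scoped BigOperators

namespace RimHookPaper

/-- A partition: a weakly decreasing, eventually-zero sequence of naturals;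
`parts n` is the `(n+1)`-st part. -/
structure Partition : Type where
  parts : ℕ → ℕ
  antitone : ∀ ⦃i j : ℕ⦄, i ≤ j → parts j ≤ parts i
  eventually_zero : ∃ N : ℕ, ∀ i : ℕ, N ≤ i → parts i = 0

namespace Partition

/-- The size `|λ|` of a partition. -/
noncomputable def size (P : Partition) : ℕ := ∑ᶠ i, P.parts i

/-- The empty partition. -/
def empty : Partition := ⟨fun _ => 0, fun _ _ _ => le_rfl, ⟨0, fun _ _ => rfl⟩⟩

/-- The number of nonzero parts of a partition. -/
noncomputable def length (P : Partition) : ℕ := sInf {N | P.parts N = 0}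

/-- The cells of the Young diagram of a partition. -/
def cells (P : Partition) : Set (ℕ × ℕ) := {c | c.2 < P.parts c.1}

instance : LE Partition := ⟨fun Q P => ∀ i, Q.parts i ≤ P.parts i⟩

/-- The skew shape `P / Q` (as a set of cells). -/
def skew (P Q : Partition) : Set (ℕ × ℕ) := P.cells \ Q.cells

end Partition

/-- Edge-adjacency of cells. -/
def Adj (c d : ℕ × ℕ) : Prop :=
  (c.1 = d.1 ∧ (c.2 + 1 = d.2 ∨ d.2 + 1 = c.2)) ∨
    (c.2 = d.2 ∧ (c.1 + 1 = d.1 ∨ d.1 + 1 = c.1))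

/-- A set of cells is (edge-)connected. -/
def IsConnectedSet (S : Set (ℕ × ℕ)) : Prop :=
  ∀ c ∈ S, ∀ d ∈ S, Relation.ReflTransGen (fun x y => x ∈ S ∧ y ∈ S ∧ Adj x y) c d

/-- `S` contains no 2×2 square. -/
def NoSquare (S : Set (ℕ × ℕ)) : Prop :=
  ¬ ∃ i j : ℕ, (i, j) ∈ S ∧ (i + 1, j) ∈ S ∧ (i, j + 1) ∈ S ∧ (i + 1, j + 1) ∈ S

/-- `P / Q` is a rim hook (border strip) of length `t`: a nonempty connected skew
shape with no 2×2 square, consisting of `t` boxes. -/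
def IsRimHook (P Q : Partition) (t : ℕ) : Prop :=
  Q ≤ P ∧ (P.skew Q).Nonempty ∧ IsConnectedSet (P.skew Q) ∧ NoSquare (P.skew Q) ∧
    (P.skew Q).ncard = t

/-- One step of a rim hook tableau: an empty hook (`t = 0`) or a rim hook of length `t`. -/
def IsStep (P Q : Partition) (t : ℕ) : Prop :=
  (t = 0 ∧ P = Q) ∨ (0 < t ∧ IsRimHook P Q t)

/-- Number of rows met by a set of cells. -/
noncomputable def rowCount (S : Set (ℕ × ℕ)) : ℕ := (Prod.fst '' S).ncard

/-- A rim hook tableau of shape `P` and type `μ`: a chain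
`∅ = λ⁰ ⊆ λ¹ ⊆ ⋯ ⊆ λʳ = P` with each `λⁱ/λⁱ⁻¹` a (possibly empty)
rim hook of length `μᵢ`. -/
structure RHT (P : Partition) (μ : List ℕ) : Type where
  chain : Fin (μ.length + 1) → Partition
  chain_zero : chain 0 = Partition.empty
  chain_last : chain (Fin.last μ.length) = P
  step : ∀ j : Fin μ.length, IsStep (chain j.succ) (chain j.castSucc) (μ.get j)

/-- The total height of a rim hook tableau: the sum of the heights
(number of rows minus one) of its nonempty rim hooks. -/
noncomputable def RHT.height {P : Partition} {μ : List ℕ} (T : RHT P μ) : ℕ :=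
  ∑ j : Fin μ.length, (rowCount ((T.chain j.succ).skew (T.chain j.castSucc)) - 1)

/-- The character value `χ^λ_μ` of the symmetric group, via the
Murnaghan–Nakayama rule. -/
noncomputable def chiAux (P : Partition) (μ : List ℕ) : ℤ :=
  ∑ᶠ T : RHT P μ, (-1 : ℤ) ^ T.height

/-- The parts of a multiset, listed in weakly decreasing order. -/
def typeList (μ : Multiset ℕ) : List ℕ := (μ.sort (· ≤ ·)).reverse

/-- `χ^λ_μ` for a multiset type `μ`. -/
noncomputable def chi (P : Partition) (μ : Multiset ℕ) : ℤ := chiAux P (typeList μ)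

/-- `z_μ = ∏_j m_j! · j^{m_j}` where `μ` has `m_j` parts equal to `j`. -/
def zpart (μ : Multiset ℕ) : ℕ := μ.prod * ∏ j ∈ μ.toFinset, (μ.count j).factorial

/-- `χ^λ(σ)`: the character evaluated at a permutation, via its full cycle type
(including fixed points as parts equal to 1). -/
noncomputable def chiPerm (P : Partition) {m : ℕ} (σ : Equiv.Perm (Fin m)) : ℤ :=
  chi P (σ.cycleType + Multiset.replicate (m - σ.cycleType.sum) 1)

/-- Position of the zero (up step) corresponding to row `n` in the 0/1 sequence
`s(P)`, where the median of `s(P)` is the gap just below position `0`. -/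
def zpos (P : Partition) (n : ℕ) : ℤ := (P.parts n : ℤ) - (n : ℤ) - 1

/-- `s(P)` has a `0` (an up step) at position `x`; otherwise it has a `1`. -/
def isZeroAt (P : Partition) (x : ℤ) : Prop := ∃ n : ℕ, zpos P n = x

/-- `Q` is the `k`-quotient of `P`: for each residue `i`, the 0/1 sequence of `Q i`
is (up to the shift `d` recording the position of its median) the subsequence of
`s(P)` consisting of every `k`-th digit, including the `(i+1)`-st digit after the
median of `s(P)`. -/
def IsKQuotient (k : ℕ) (P : Partition) (Q : Fin k → Partition) : Prop :=
  ∀ i : Fin k, ∃ d : ℤ, ∀ j : ℤ,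
    isZeroAt (Q i) j ↔ isZeroAt P (((i : ℕ) : ℤ) + (j + d) * (k : ℤ))

/-- `C` is the `k`-core of `P`: it is obtained from `P` by successively removing
rim hooks of length `k`, as long as possible. -/
def IsKCore (k : ℕ) (P C : Partition) : Prop :=
  Relation.ReflTransGen (fun A B => IsRimHook A B k) P C ∧ ¬ ∃ C', IsRimHook C C' k

/-- The map on row indices induced by moving the zero in row `m` down (left)
to row `m'`, the zeros in rows `m+1,…,m'` each moving up one row. -/
def cycleFun (m m' n : ℕ) : ℕ :=
  if n = m then m' else if m < n ∧ n ≤ m' then n - 1 else n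

/-- One tracking step for the zero permutation: passing from `A` to `B` by removing
a rim hook, encoded on the 0/1 sequence as interchanging a `1` with a later `0`
(the moved zero, in row `m` of `A`, jumps over `m' - m` zeros, landing in row `m'`
of `B`); the row of each labeled zero is updated by `cycleFun m m'`. -/
def StepTrack (A B : Partition) (f g : ℕ → ℕ) : Prop :=
  (A = B ∧ g = f) ∨
    ∃ m m' : ℕ, m ≤ m' ∧
      (∀ n, n < m → zpos B n = zpos A n) ∧
      (∀ n, m ≤ n → n < m' → zpos B n = zpos A (n + 1)) ∧
      (∀ n, m' < n → zpos B n = zpos A n) ∧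
      g = fun i => cycleFun m m' (f i)

/-- `π` is the zero permutation of the rim hook tableau `T`: label the zeros of
`s(P)` succeeding the first one by `1,…,ℓ(P)` from left to right (`q j i` is the
row of label `i+1` at stage `j` of the peeling, rows counted from the top), peel
the rim hooks of `T` in order of decreasing entries, and read off the labels in
the final sequence `s(∅)` from left to right. -/
def IsZeroPerm {P : Partition} {μ : List ℕ} (T : RHT P μ)
    (π : Equiv.Perm (Fin P.length)) : Prop :=
  ∃ q : Fin (μ.length + 1) → ℕ → ℕ,
    (∀ i : ℕ, i < P.length → q (Fin.last μ.length) i = P.length - 1 - i) ∧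
    (∀ j : Fin μ.length,
      StepTrack (T.chain j.succ) (T.chain j.castSucc) (q j.succ) (q j.castSucc)) ∧
    (∀ i : Fin P.length, q 0 ((π i : ℕ)) = P.length - 1 - (i : ℕ))

/-- `ω(T) = (T₁,…,T_k)`: the rim hook tableau `T` (all of whose hook lengths are
divisible by `k`) decomposes into the `k`-tuple of rim hook tableaux `Ti` on the
`k`-quotient: each step of `T`, removing a hook of length `k·t`, affects exactly
one subsequence (mod `k`) of the 0/1 sequence, i.e. removes a hook of length `t`
from exactly one of the quotient partitions. -/
def OmegaRel (k : ℕ) {P : Partition} {κ : List ℕ} (T : RHT P κ)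
    {Q : Fin k → Partition} {ν : Fin k → List ℕ}
    (Ti : ∀ i : Fin k, RHT (Q i) (ν i)) : Prop :=
  ∃ (QC : Fin (κ.length + 1) → Fin k → Partition) (a : Fin κ.length → Fin k),
    (∀ j, IsKQuotient k (T.chain j) (QC j)) ∧
    (∀ j : Fin κ.length, ∀ i, i ≠ a j → QC j.castSucc i = QC j.succ i) ∧
    (∀ j : Fin κ.length, ∃ t : ℕ, κ.get j = k * t ∧
      IsStep (QC j.succ (a j)) (QC j.castSucc (a j)) t) ∧
    (∀ i : Fin k, ∃ e : Fin (ν i).length → Fin κ.length,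
      StrictMono e ∧ (∀ s, a (e s) = i) ∧ (∀ j, a j = i → ∃ s, e s = j) ∧
      (∀ s, k * (ν i).get s = κ.get (e s)) ∧
      (Ti i).chain 0 = QC 0 i ∧
      (∀ s : Fin (ν i).length, (Ti i).chain s.succ = QC (Fin.succ (e s)) i))

/-! By the Murnaghan–Nakayama rule, `χ^λ_μ` is the coefficient of `x^(λ + δ)` in
`a_δ · ∏ p_{μ_i}`: multiplication by the power sum `p_t` relates the coefficient at `λ + δ` to
those obtained by lowering one exponent by `t`, which either makes two exponents equal or removes a
rim hook, whose height has the parity of the cycle sorting the exponents. Since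
`∑_{μ ⊢ p} p_{kμ} / z_μ = h_p(x_1^k, …, x_n^k)`, the number `ε₁(λ)` is a coefficient of
`a_δ · h_p(x_1^k, …, x_n^k)`, that is, the determinant of the 0/1 matrix recording whether
`λ_j + n - j` exceeds `n - i` by a nonnegative multiple of `k`. If `λ` has exactly `n > k` nonzero
parts, the rows with `n - i = 0` and `n - i = k` agree. For `n = k` the matrix compares residues
modulo `k`, so it is a permutation matrix or has two equal columns. -/

section SymmetricPolynomials

open MvPolynomial

theorem zpart_cons (a : ℕ) (μ : Multiset ℕ) :
    zpart (a ::ₘ μ) = a * (μ.count a + 1) * zpart μ := by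
  have prod_factorial_cons : ∏ j ∈ (a ::ₘ μ).toFinset, ((a ::ₘ μ).count j).factorial =
      (μ.count a + 1) * ∏ j ∈ (a ::ₘ μ).toFinset, (μ.count j).factorial := by
    have ha : a ∈ (a ::ₘ μ).toFinset := by simp
    rw [← Finset.mul_prod_erase _ _ ha, ← Finset.mul_prod_erase _ _ ha, Multiset.count_cons_self,
      Nat.factorial_succ, mul_assoc]
    congr 2
    exact Finset.prod_congr rfl fun j hj ↦ by
      rw [Multiset.count_cons_of_ne (Finset.ne_of_mem_erase hj)]
  have prod_factorial_subset : ∏ j ∈ μ.toFinset, (μ.count j).factorial =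
      ∏ j ∈ (a ::ₘ μ).toFinset, (μ.count j).factorial := by
    refine Finset.prod_subset (fun j ↦ by simpa using Or.inr) fun j _ hj ↦ ?_
    rw [Multiset.count_eq_zero_of_notMem (by simpa using hj), Nat.factorial_zero]
  rw [zpart, zpart, Multiset.prod_cons, prod_factorial_cons, prod_factorial_subset]
  ring

theorem sum_mul_count_parts {p : ℕ} (μ : Nat.Partition p) :
    ∑ j ∈ Finset.Icc 1 p, j * μ.parts.count j = p := by
  conv_rhs => rw [← μ.parts_sum, Finset.sum_multiset_count]
  simp only [smul_eq_mul, mul_comm]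
  refine (Finset.sum_subset (fun j hj ↦ ?_) fun j _ hj ↦ ?_).symm
  · rw [Multiset.mem_toFinset] at hj
    exact Finset.mem_Icc.2 ⟨μ.parts_pos hj, Nat.Partition.le_of_mem_parts hj⟩
  · simp [Multiset.count_eq_zero_of_notMem (mt Multiset.mem_toFinset.2 hj)]

/-- The cycle index of the symmetric group `S_p` evaluated at `g 1, g 2, …`. -/
noncomputable def cycleIndex {A : Type*} [CommSemiring A] [Algebra ℚ A] (g : ℕ → A) (p : ℕ) : A :=
  ∑ μ : Nat.Partition p, (1 / (zpart μ.parts : ℚ)) • (μ.parts.map g).prod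

section CycleIndex

variable {A B : Type*} [CommSemiring A] [Algebra ℚ A] [CommSemiring B] [Algebra ℚ B]

theorem map_cycleIndex (f : A →ₐ[ℚ] B) (g : ℕ → A) (p : ℕ) :
    f (cycleIndex g p) = cycleIndex (fun j ↦ f (g j)) p := by
  simp only [cycleIndex, map_sum, map_smul, map_multiset_prod, Multiset.map_map,
    Function.comp_def]

/-- Partitions of `p` with a distinguished part `j` correspond to partitions of `p - j`. -/
theorem sum_count_div_zpart_smul (g : ℕ → A) {p j : ℕ} (hj : 1 ≤ j) (hjp : j ≤ p) :
    ∑ μ : Nat.Partition p, ((j * μ.parts.count j : ℚ) / zpart μ.parts) • (μ.parts.map g).prod =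
      g j * cycleIndex g (p - j) := by
  classical
  calc ∑ μ : Nat.Partition p, ((j * μ.parts.count j : ℚ) / zpart μ.parts) • (μ.parts.map g).prod
      = ∑ μ : Nat.Partition p with j ∈ μ.parts,
          ((j * μ.parts.count j : ℚ) / zpart μ.parts) • (μ.parts.map g).prod := by
        refine (Finset.sum_subset (Finset.filter_subset _ _) fun μ _ hμ ↦ ?_).symm
        rw [Multiset.count_eq_zero_of_notMem (by simpa using hμ)]
        simp
    _ = ∑ μ : {μ : Nat.Partition p // j ∈ μ.parts},
          ((j * μ.1.parts.count j : ℚ) / zpart μ.1.parts) • (μ.1.parts.map g).prod :=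
        Finset.sum_subtype _ (by simp) _
    _ = g j * cycleIndex g (p - j) := by
        rw [← (Nat.Partition.partitionWithPartEquiv hj hjp).symm.sum_comp, cycleIndex,
          Finset.mul_sum]
        refine Finset.sum_congr rfl fun ν _ ↦ ?_
        rw [Nat.Partition.partitionWithPartEquiv_symm_apply_parts, Multiset.map_cons,
          Multiset.prod_cons, zpart_cons, Multiset.count_cons_self, mul_smul_comm]
        have hne : (j * (ν.parts.count j + 1) : ℚ) ≠ 0 := by positivity
        push_cast
        rw [div_mul_eq_div_div, div_self hne]

theorem nsmul_cycleIndex (g : ℕ → A) (p : ℕ) :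
    p • cycleIndex g p = ∑ j ∈ Finset.Icc 1 p, g j * cycleIndex g (p - j) := by
  calc p • cycleIndex g p
      = ∑ μ : Nat.Partition p, ∑ j ∈ Finset.Icc 1 p,
          ((j * μ.parts.count j : ℚ) / zpart μ.parts) • (μ.parts.map g).prod := by
        rw [cycleIndex, Finset.smul_sum]
        refine Finset.sum_congr rfl fun μ _ ↦ ?_
        have hp : (p : ℚ) = ∑ j ∈ Finset.Icc 1 p, (j * μ.parts.count j : ℚ) := by
          exact_mod_cast (sum_mul_count_parts μ).symm
        rw [← Finset.sum_smul, ← Finset.sum_div, ← hp, ← Nat.cast_smul_eq_nsmul ℚ, smul_smul,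
          mul_one_div]
    _ = _ := by
        rw [Finset.sum_comm]
        exact Finset.sum_congr rfl fun j hj ↦
          sum_count_div_zpart_smul g (Finset.mem_Icc.1 hj).1 (Finset.mem_Icc.1 hj).2

end CycleIndex

theorem prod_map_X_eq_monomial {σ R : Type*} [DecidableEq σ] [CommSemiring R] (s : Multiset σ) :
    (s.map X).prod = monomial (Multiset.toFinsupp s) (1 : R) := by
  induction s using Multiset.induction with
  | empty => simp
  | cons a s ih =>
    rw [Multiset.map_cons, Multiset.prod_cons, ih, ← Multiset.singleton_add,
      Multiset.toFinsupp_add, Multiset.toFinsupp_singleton, X, monomial_mul, one_mul]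

variable {σ R : Type*} [Fintype σ] [CommSemiring R]

theorem coeff_mul_psum (f : MvPolynomial σ R) (t : ℕ) (γ : σ →₀ ℕ) :
    coeff γ (f * psum σ R t) =
      ∑ i, if t ≤ γ i then coeff (γ - Finsupp.single i t) f else 0 := by
  rw [psum, Finset.mul_sum, coeff_sum]
  refine Finset.sum_congr rfl fun i _ ↦ ?_
  simp only [X_pow_eq_monomial, coeff_mul_monomial', Finsupp.single_le_iff, mul_one]

theorem coeff_hsymm [DecidableEq σ] (p : ℕ) (γ : σ →₀ ℕ) :
    coeff γ (hsymm σ R p) = if γ.degree = p then 1 else 0 := by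
  simp only [hsymm, coeff_sum, prod_map_X_eq_monomial, coeff_monomial, Multiset.toFinsupp_eq_iff]
  split_ifs with h
  · rw [Finset.sum_eq_single ⟨Finsupp.toMultiset γ, by rw [Finsupp.card_toMultiset, ← h]; rfl⟩]
    · exact if_pos rfl
    · exact fun s _ hs ↦ if_neg fun hγ ↦ hs (Subtype.ext hγ)
    · exact fun h ↦ absurd (Finset.mem_univ _) h
  · refine Finset.sum_eq_zero fun s _ ↦ if_neg fun hγ ↦ h ?_
    rw [← s.2, hγ, Finsupp.card_toMultiset]
    rfl

/-- Coefficientwise, this says that the exponents of a monomial of degree `p` sum to `p`. -/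
theorem nsmul_hsymm [DecidableEq σ] (p : ℕ) :
    p • hsymm σ R p = ∑ j ∈ Finset.Icc 1 p, psum σ R j * hsymm σ R (p - j) := by
  ext γ
  simp only [coeff_sum, mul_comm (psum σ R _), coeff_mul_psum, coeff_hsymm, coeff_smul]
  have degree_sub {i : σ} {j : ℕ} (hj : j ≤ γ i) :
      (γ - Finsupp.single i j).degree + j = γ.degree := by
    rw [← Finsupp.degree_single i j, ← map_add, Finsupp.degree_single,
      tsub_add_cancel_of_le (Finsupp.single_le_iff.2 hj)]
  have summand {j : ℕ} (hj : j ∈ Finset.Icc 1 p) (i : σ) :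
      (if j ≤ γ i then if (γ - Finsupp.single i j).degree = p - j then (1 : R) else 0 else 0) =
        if γ.degree = p then if j ≤ γ i then 1 else 0 else 0 := by
    rw [Finset.mem_Icc] at hj
    by_cases hji : j ≤ γ i
    · have := degree_sub hji
      simp only [hji, if_true, show (γ - Finsupp.single i j).degree = p - j ↔ γ.degree = p by omega]
    · simp [hji]
  rw [Finset.sum_congr rfl fun j hj ↦ Finset.sum_congr rfl fun i _ ↦ summand hj i]
  split_ifs with hγ
  · rw [Finset.sum_comm]
    have card_le (i : σ) : Finset.card {j ∈ Finset.Icc 1 p | j ≤ γ i} = γ i := by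
      have : {j ∈ Finset.Icc 1 p | j ≤ γ i} = Finset.Icc 1 (γ i) := by
        have := Finsupp.le_degree i γ
        ext j
        simp only [Finset.mem_filter, Finset.mem_Icc]
        omega
      rw [this, Nat.card_Icc, Nat.add_sub_cancel]
    simp only [Finset.sum_boole, card_le]
    rw [← Nat.cast_sum, ← Finsupp.degree_eq_sum, hγ, nsmul_one]
  · simp

theorem cycleIndex_psum [DecidableEq σ] [Algebra ℚ R] (p : ℕ) :
    cycleIndex (psum σ R) p = hsymm σ R p := by
  induction p using Nat.strong_induction_on with
  | _ p ih =>
    rcases Nat.eq_zero_or_pos p with rfl | hp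
    · simp [cycleIndex, zpart]
    · have hp' : IsUnit (p : ℚ) := (Nat.cast_ne_zero.2 hp.ne').isUnit
      rw [← hp'.smul_left_cancel, Nat.cast_smul_eq_nsmul, Nat.cast_smul_eq_nsmul,
        nsmul_cycleIndex, nsmul_hsymm]
      refine Finset.sum_congr rfl fun j hj ↦ ?_
      rw [ih (p - j) (by rw [Finset.mem_Icc] at hj; omega)]

theorem expand_psum (k j : ℕ) : expand k (psum σ R j) = psum σ R (k * j) := by
  simp only [psum, map_sum, map_pow, expand_X, pow_mul]

end SymmetricPolynomials

section Alternants

open MvPolynomial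

variable {σ R : Type*} [CommRing R]

/-- A polynomial is alternating if permuting its variables multiplies it by the sign of the
permutation. -/
def IsAlternating [Fintype σ] [DecidableEq σ] (f : MvPolynomial σ R) : Prop :=
  ∀ τ : Equiv.Perm σ, rename τ f = Equiv.Perm.sign τ • f

/-- The alternant `det (x_j ^ e_i)` with exponents `e`. -/
noncomputable def alternant (R : Type*) [CommRing R] [Fintype σ] [DecidableEq σ] (e : σ → ℕ) :
    MvPolynomial σ R :=
  (Matrix.of fun i j ↦ X j ^ e i).det

variable [Fintype σ] [DecidableEq σ]

theorem IsAlternating.mul_isSymmetric {f g : MvPolynomial σ R} (hf : IsAlternating f)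
    (hg : g.IsSymmetric) : IsAlternating (f * g) := fun τ ↦ by
  rw [map_mul, hf τ, hg τ, smul_mul_assoc]

theorem IsAlternating.coeff_eq {f : MvPolynomial σ R} (hf : IsAlternating f)
    (τ : Equiv.Perm σ) {γ γ' : σ →₀ ℕ} (h : ∀ i, γ' i = γ (τ i)) :
    coeff γ' f = Equiv.Perm.sign τ • coeff γ f := by
  have hγ : γ'.mapDomain τ = γ := by
    ext i
    rw [← Finsupp.equivMapDomain_eq_mapDomain, Finsupp.equivMapDomain_apply, h,
      Equiv.apply_symm_apply]
  rw [← coeff_rename_mapDomain τ τ.injective, hγ, hf τ, Units.smul_def, coeff_smul, Units.smul_def]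

theorem IsAlternating.coeff_eq_zero [NoZeroDivisors R] [CharZero R] {f : MvPolynomial σ R}
    (hf : IsAlternating f) {γ : σ →₀ ℕ} {i j : σ} (hij : i ≠ j) (h : γ i = γ j) :
    coeff γ f = 0 := by
  have hswap : ∀ l, γ l = γ (Equiv.swap i j l) := fun l ↦ by
    rw [Equiv.swap_apply_def]
    split_ifs with hi hj
    · rw [hi, h]
    · rw [hj, h]
    · rfl
  have := hf.coeff_eq (Equiv.swap i j) hswap
  rwa [Equiv.Perm.sign_swap hij, Units.neg_smul, one_smul, CharZero.eq_neg_self_iff] at this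

theorem isAlternating_alternant (e : σ → ℕ) : IsAlternating (alternant R e) := fun τ ↦ by
  rw [alternant, AlgHom.map_det, Units.smul_def, zsmul_eq_mul, ← Matrix.det_permute']
  congr 1
  ext1 i j
  simp only [AlgHom.mapMatrix_apply, Matrix.map_apply, Matrix.of_apply, Matrix.submatrix_apply,
    map_pow, rename_X, id]

theorem map_alternant {S : Type*} [CommRing S] (f : R →+* S) (e : σ → ℕ) :
    map f (alternant R e) = alternant S e := by
  rw [alternant, alternant, RingHom.map_det]
  congr 1
  ext1 i j
  simp

theorem coeff_alternant_mul (e : σ → ℕ) (f : MvPolynomial σ R) (γ : σ →₀ ℕ) :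
    coeff γ (alternant R e * f) = ∑ τ : Equiv.Perm σ, Equiv.Perm.sign τ •
      if ∀ i, e (τ i) ≤ γ i then
        coeff (γ - Finsupp.equivFunOnFinite.symm fun i ↦ e (τ i)) f else 0 := by
  rw [alternant, Matrix.det_apply, Finset.sum_mul, coeff_sum]
  refine Finset.sum_congr rfl fun τ _ ↦ ?_
  have hmon : ∏ i, (X i : MvPolynomial σ R) ^ e (τ i) =
      monomial (Finsupp.equivFunOnFinite.symm fun i ↦ e (τ i)) 1 := by
    rw [monomial_eq, C_1, one_mul, Finsupp.prod_fintype _ _ fun i ↦ pow_zero _]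
    rfl
  simp only [Matrix.of_apply, hmon]
  rw [smul_mul_assoc, Units.smul_def, coeff_smul, mul_comm, coeff_mul_monomial', mul_one,
    Units.smul_def]
  congr 1
  exact if_congr Iff.rfl rfl rfl

/-- The matrix whose `(i, j)` entry records whether `p i j` holds. -/
noncomputable def indicatorMatrix (R : Type*) [Zero R] [One R] (p : σ → σ → Prop) : Matrix σ σ R :=
  open Classical in Matrix.of fun i j ↦ if p i j then 1 else 0

theorem det_indicatorMatrix {R : Type*} [CommRing R] (p : σ → σ → Prop)
    [DecidablePred fun τ : Equiv.Perm σ ↦ ∀ i, p (τ i) i] :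
    (indicatorMatrix R p).det = ∑ τ : Equiv.Perm σ, Equiv.Perm.sign τ •
      if ∀ i, p (τ i) i then 1 else 0 := by
  rw [Matrix.det_apply]
  refine Finset.sum_congr rfl fun τ _ ↦ ?_
  simp only [indicatorMatrix, Matrix.of_apply, Finset.prod_boole, Finset.mem_univ, true_imp_iff]

theorem det_indicatorMatrix_eq_sign {α : Type*} {r c : σ → α} (hc : Function.Injective c)
    {τ : Equiv.Perm σ} (h : ∀ i, r (τ i) = c i) :
    (indicatorMatrix R fun i j ↦ c i = r j).det = Equiv.Perm.sign τ := by
  rw [← Matrix.det_permutation]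
  congr 1
  ext1 i j
  have hr : c i = r j ↔ τ i = j := by
    rw [← (Equiv.apply_symm_apply τ j), h, hc.eq_iff, τ.injective.eq_iff]
  simp only [indicatorMatrix, Matrix.of_apply, hr, PEquiv.toMatrix_apply,
    Equiv.toPEquiv_apply, Option.mem_some_iff]

theorem det_indicatorMatrix_eq_zero_of_row_iff {p : σ → σ → Prop} {i i' : σ} (hne : i ≠ i')
    (h : ∀ j, p i j ↔ p i' j) : (indicatorMatrix R p).det = 0 := by
  classical
  exact Matrix.det_zero_of_row_eq hne (_root_.funext fun j ↦ if_congr (h j) rfl rfl)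

theorem det_indicatorMatrix_eq_zero {α : Type*} {r c : σ → α} (hr : ¬ Function.Injective r) :
    (indicatorMatrix R fun i j ↦ c i = r j).det = 0 := by
  classical
  obtain ⟨i, j, hij, hne⟩ := Function.not_injective_iff.1 hr
  refine Matrix.det_zero_of_column_eq hne fun l ↦ ?_
  exact congrArg (fun x ↦ if c l = x then (1 : R) else 0) hij

theorem coeff_alternant (e : σ → ℕ) (γ : σ →₀ ℕ) :
    coeff γ (alternant R e) = (indicatorMatrix R fun i j ↦ e i = γ j).det := by
  rw [← mul_one (alternant R e), coeff_alternant_mul, det_indicatorMatrix]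
  refine Finset.sum_congr rfl fun τ _ ↦ ?_
  have hiff : (∀ i, e (τ i) = γ i) ↔ (∀ i, e (τ i) ≤ γ i) ∧
      0 = γ - Finsupp.equivFunOnFinite.symm fun i ↦ e (τ i) := by
    rw [eq_comm (a := 0), tsub_eq_zero_iff_le, Finsupp.le_def, ← forall_and]
    exact forall_congr' fun i ↦ le_antisymm_iff
  simp only [coeff_one, hiff, ite_and]

theorem coeff_expand_hsymm {k : ℕ} (hk : 0 < k) {p : ℕ} {γ : σ →₀ ℕ} (h : γ.degree = k * p) :
    coeff γ (expand k (hsymm σ R p)) = if ∀ i, k ∣ γ i then 1 else 0 := by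
  split_ifs with hdvd
  · choose m hm using hdvd
    obtain rfl : γ = k • Finsupp.equivFunOnFinite.symm m := Finsupp.ext hm
    rw [map_nsmul, smul_eq_mul] at h
    rw [coeff_expand_smul _ hk.ne', coeff_hsymm, if_pos (Nat.eq_of_mul_eq_mul_left hk h)]
  · obtain ⟨i, hi⟩ := not_forall.1 hdvd
    exact coeff_expand_of_not_dvd _ hi

theorem coeff_alternant_mul_expand_hsymm (e : σ → ℕ) {γ : σ →₀ ℕ} {k p : ℕ} (hk : 0 < k)
    (h : γ.degree = ∑ i, e i + k * p) :
    coeff γ (alternant R e * expand k (hsymm σ R p)) =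
      (indicatorMatrix R fun i j ↦ e i ≤ γ j ∧ k ∣ γ j - e i).det := by
  rw [coeff_alternant_mul, det_indicatorMatrix]
  refine Finset.sum_congr rfl fun τ _ ↦ ?_
  simp only [forall_and, ite_and]
  congr 1
  refine if_ctx_congr Iff.rfl (fun hle ↦ ?_) fun _ ↦ rfl
  have hsum : ∑ i, γ i = ∑ i, e (τ i) + k * p := by
    rw [← Finsupp.degree_eq_sum, h, Equiv.sum_comp τ e]
  rw [coeff_expand_hsymm hk]
  · rfl
  · rw [Finsupp.degree_eq_sum]
    simp only [Finsupp.tsub_apply, Finsupp.equivFunOnFinite_symm_apply_apply]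
    rw [Finset.sum_tsub_distrib _ fun i _ ↦ hle i, hsum, Nat.add_sub_cancel_left]

end Alternants

section RimHooks

variable {P Q : Partition} {t i m : ℕ}

theorem zpos_strictAnti (P : Partition) : StrictAnti (zpos P) := fun r s hrs ↦ by
  have := P.antitone hrs.le
  simp only [zpos]
  omega

theorem zpos_injective : Function.Injective zpos := by
  rintro ⟨p, hp, hp₀⟩ ⟨q, hq, hq₀⟩ h
  obtain rfl : p = q := funext fun r ↦ by
    simpa only [zpos, sub_left_inj, Nat.cast_inj] using congrFun h r
  rfl

theorem exists_zpos_eq {z : ℕ → ℤ} (hz : StrictAnti z) (hz₀ : ∃ N : ℕ, ∀ r ≥ N, z r = -r - 1) :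
    ∃ Q : Partition, zpos Q = z := by
  obtain ⟨N, hN⟩ := hz₀
  have shift_antitone : Antitone fun r ↦ z r + r + 1 := antitone_nat_of_succ_le fun r ↦ by
    have := hz (Nat.lt_add_one r)
    push_cast
    omega
  have shift_nonneg (r : ℕ) : 0 ≤ z r + r + 1 := by
    have hle : z (max r N) + ↑(max r N) + 1 ≤ z r + r + 1 := shift_antitone (le_max_left r N)
    have := hN _ (le_max_right r N)
    omega
  refine ⟨⟨fun r ↦ (z r + r + 1).toNat, fun r s hrs ↦ Int.toNat_le_toNat (shift_antitone hrs),
    N, fun r hr ↦ ?_⟩, funext fun r ↦ ?_⟩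
  · rw [hN r hr]
    omega
  · have := shift_nonneg r
    simp only [zpos]
    omega

/-- `Q` arises from `P` by moving the zero of row `i` of the 0/1 sequence `t` places to the left,
past the zeros of rows `i + 1, …, m`, which thereby become those of rows `i, …, m - 1`. -/
structure IsBeadMove (P Q : Partition) (t i m : ℕ) : Prop where
  le : i ≤ m
  zpos_of_lt : ∀ r < i, zpos Q r = zpos P r
  zpos_of_mem_Ico : ∀ r, i ≤ r → r < m → zpos Q r = zpos P (r + 1)
  zpos_last : zpos Q m = zpos P i - t
  zpos_of_gt : ∀ r, m < r → zpos Q r = zpos P r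

theorem exists_isBeadMove (ht : 0 < t) (h : ¬ isZeroAt P (zpos P i - t)) :
    ∃ Q m, IsBeadMove P Q t i m := by
  have hlow : ∃ r, zpos P r ≤ zpos P i - t := by
    refine ⟨P.parts 0 + i + t, ?_⟩
    have := P.antitone (P.parts 0 + i + t).zero_le
    simp only [zpos]
    omega
  obtain ⟨m, hm⟩ : ∃ m, Nat.find hlow = m + 1 := by
    refine Nat.exists_eq_succ_of_ne_zero fun h₀ ↦ ?_
    have := Nat.find_spec hlow
    have := (zpos_strictAnti P).antitone i.zero_le
    rw [h₀] at *
    omega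
  have hlt_next : zpos P (m + 1) < zpos P i - t :=
    lt_of_le_of_ne (hm ▸ Nat.find_spec hlow) fun heq ↦ h ⟨m + 1, heq⟩
  have hm_lt : zpos P i - t < zpos P m :=
    not_le.1 (Nat.find_min hlow (hm ▸ m.lt_succ_self))
  have him : i ≤ m := by
    by_contra hmi
    have := (zpos_strictAnti P).antitone (show m + 1 ≤ i by omega)
    omega
  let z : ℕ → ℤ := fun r ↦
    if r < i then zpos P r else if r < m then zpos P (r + 1) else
      if r = m then zpos P i - t else zpos P r
  have hz : StrictAnti z := strictAnti_nat_of_succ_lt fun r ↦ by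
    have h₁ := zpos_strictAnti P r.lt_succ_self
    have h₂ := zpos_strictAnti P (r + 1).lt_succ_self
    simp only [z]
    split_ifs <;> grind
  obtain ⟨N, hN⟩ := P.eventually_zero
  obtain ⟨Q, hQ⟩ := exists_zpos_eq hz ⟨N + m + 1, fun r hr ↦ by
    have := hN r (by omega)
    simp only [z, zpos]
    grind⟩
  refine ⟨Q, m, him, ?_, ?_, ?_, ?_⟩ <;> rw [hQ] <;> grind

namespace IsBeadMove

theorem not_isZeroAt (h : IsBeadMove P Q t i m) (ht : 0 < t) : ¬ isZeroAt P (zpos P i - t) := by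
  rintro ⟨n, hn⟩
  rw [← h.zpos_last] at hn
  have hP := zpos_strictAnti P
  have hQ := zpos_strictAnti Q
  rcases lt_trichotomy n i with hni | rfl | hin
  · have := hP hni
    have := h.zpos_last
    omega
  · have := h.zpos_last
    omega
  · obtain ⟨s, rfl⟩ := Nat.exists_eq_add_one_of_ne_zero (Nat.ne_zero_of_lt hin)
    rcases lt_or_ge s m with hsm | hms
    · have := hQ.injective ((h.zpos_of_mem_Ico s (by omega) hsm).trans hn)
      omega
    · have := hQ.injective ((h.zpos_of_gt (s + 1) (by omega)).trans hn)
      omega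

theorem last_le {Q' : Partition} {m' : ℕ} (h : IsBeadMove P Q t i m)
    (h' : IsBeadMove P Q' t i m') : m' ≤ m := by
  by_contra! hlt
  have hQ' := zpos_strictAnti Q' hlt
  have hQ := zpos_strictAnti Q (Nat.lt_add_one m)
  rw [h.zpos_of_gt _ (Nat.lt_add_one m), h.zpos_last] at hQ
  rw [h'.zpos_of_mem_Ico m h.le hlt, h'.zpos_last] at hQ'
  omega

theorem unique {Q' : Partition} {m' : ℕ} (h : IsBeadMove P Q t i m)
    (h' : IsBeadMove P Q' t i m') : Q = Q' := by
  obtain rfl : m = m' := le_antisymm (h'.last_le h) (h.last_le h')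
  refine zpos_injective (funext fun r ↦ ?_)
  rcases lt_or_ge r i with hri | hir
  · rw [h.zpos_of_lt r hri, h'.zpos_of_lt r hri]
  rcases lt_trichotomy r m with hrm | rfl | hmr
  · rw [h.zpos_of_mem_Ico r hir hrm, h'.zpos_of_mem_Ico r hir hrm]
  · rw [h.zpos_last, h'.zpos_last]
  · rw [h.zpos_of_gt r hmr, h'.zpos_of_gt r hmr]

theorem parts_add_one_eq (h : IsBeadMove P Q t i m) {r : ℕ} (hir : i ≤ r) (hrm : r < m) :
    Q.parts r + 1 = P.parts (r + 1) := by
  have := h.zpos_of_mem_Ico r hir hrm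
  simp only [zpos] at this
  omega

theorem parts_eq (h : IsBeadMove P Q t i m) {r : ℕ} (hr : r < i ∨ m < r) :
    Q.parts r = P.parts r := by
  have := hr.elim (h.zpos_of_lt r) (h.zpos_of_gt r)
  simp only [zpos] at this
  omega

theorem parts_last_add (h : IsBeadMove P Q t i m) :
    Q.parts m + t + i = P.parts i + m := by
  have := h.zpos_last
  simp only [zpos] at this
  omega

theorem parts_lt_iff (h : IsBeadMove P Q t i m) (ht : 0 < t) (r : ℕ) :
    Q.parts r < P.parts r ↔ i ≤ r ∧ r ≤ m := by
  refine ⟨fun hr ↦ ?_, fun ⟨hir, hrm⟩ ↦ ?_⟩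
  · by_contra hout
    have := h.parts_eq (r := r) (by omega)
    omega
  rcases hrm.lt_or_eq with hrm | rfl
  · have := h.parts_add_one_eq hir hrm
    have := P.antitone (Nat.le_add_right r 1)
    omega
  · rcases hir.lt_or_eq with hir | rfl
    · obtain ⟨s, rfl⟩ := Nat.exists_eq_add_one_of_ne_zero (Nat.ne_zero_of_lt hir)
      have := h.parts_add_one_eq (r := s) (by omega) (by omega)
      have := Q.antitone (Nat.le_add_right s 1)
      omega
    · have := h.parts_last_add
      omega

theorem parts_le (h : IsBeadMove P Q t i m) (ht : 0 < t) (r : ℕ) : Q.parts r ≤ P.parts r := by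
  by_cases hr : i ≤ r ∧ r ≤ m
  · exact ((h.parts_lt_iff ht r).2 hr).le
  · exact (h.parts_eq (by omega)).le

theorem row_unique {i' m' : ℕ} (h : IsBeadMove P Q t i m) (h' : IsBeadMove P Q t i' m')
    (ht : 0 < t) : i = i' := by
  have hi := (h'.parts_lt_iff ht i).1 ((h.parts_lt_iff ht i).2 ⟨le_rfl, h.le⟩)
  have hi' := (h.parts_lt_iff ht i').1 ((h'.parts_lt_iff ht i').2 ⟨le_rfl, h'.le⟩)
  exact le_antisymm hi'.1 hi.1

end IsBeadMove

theorem mem_skew {r j : ℕ} : (r, j) ∈ P.skew Q ↔ Q.parts r ≤ j ∧ j < P.parts r := by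
  rw [Partition.skew, Set.mem_sdiff, Partition.cells, Partition.cells, Set.mem_ofPred_eq,
    Set.mem_ofPred_eq, not_lt, and_comm]

theorem rowCount_skew (h : ∀ r, Q.parts r < P.parts r ↔ i ≤ r ∧ r ≤ m) :
    rowCount (P.skew Q) = m + 1 - i := by
  have rows_eq : Prod.fst '' P.skew Q = Finset.Icc i m := by
    ext r
    rw [Finset.mem_coe, Finset.mem_Icc, ← h]
    constructor
    · rintro ⟨c, hc, rfl⟩
      exact (mem_skew.1 hc).1.trans_lt (mem_skew.1 hc).2
    · exact fun hr ↦ ⟨(r, Q.parts r), mem_skew.2 ⟨le_rfl, hr⟩, rfl⟩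
  rw [rowCount, rows_eq, Set.ncard_coe_finset, Nat.card_Icc]

theorem ncard_skew (h : ∀ r, Q.parts r < P.parts r ↔ i ≤ r ∧ r ≤ m) :
    (P.skew Q).ncard = ∑ r ∈ Finset.Icc i m, (P.parts r - Q.parts r) := by
  have skew_eq : P.skew Q = (((Finset.Icc i m).sigma fun r ↦ Finset.Ico (Q.parts r) (P.parts r)).map
      (Equiv.sigmaEquivProd ℕ ℕ).toEmbedding : Finset (ℕ × ℕ)) := by
    ext ⟨r, j⟩
    rw [mem_skew, Finset.mem_coe, Finset.mem_map_equiv, Finset.mem_sigma, Finset.mem_Icc, ← h,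
      Finset.mem_Ico]
    exact ⟨fun hc ↦ ⟨hc.1.trans_lt hc.2, hc⟩, And.right⟩
  rw [skew_eq, Set.ncard_coe_finset, Finset.card_map, Finset.card_sigma]
  simp only [Nat.card_Ico]

theorem sum_tsub_add_eq_of_succ {p q : ℕ → ℕ} (him : i ≤ m)
    (hpq : ∀ r, i ≤ r → r < m → q r + 1 = p (r + 1)) (hle : ∀ r, q r ≤ p r) :
    ∑ r ∈ Finset.Icc i m, (p r - q r) + q m + i = p i + m := by
  induction m, him using Nat.le_induction with
  | base =>
    have := hle i
    rw [Finset.Icc_self, Finset.sum_singleton]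
    omega
  | succ m him ih =>
    have := ih fun r hir hrm ↦ hpq r hir (by omega)
    have := hpq m him (by omega)
    have := hle m
    have := hle (m + 1)
    rw [Finset.sum_Icc_succ_top (by omega)]
    omega

theorem exists_mem_succ_mem_of_isConnectedSet {S : Set (ℕ × ℕ)} (hS : IsConnectedSet S)
    {c d : ℕ × ℕ} (hc : c ∈ S) (hd : d ∈ S) {r : ℕ} (hcr : c.1 ≤ r) (hrd : r < d.1) :
    ∃ j, (r, j) ∈ S ∧ (r + 1, j) ∈ S := by
  by_contra! hcross
  have reachable_le (x : ℕ × ℕ)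
      (hx : Relation.ReflTransGen (fun x y ↦ x ∈ S ∧ y ∈ S ∧ Adj x y) c x) : x.1 ≤ r := by
    induction hx with
    | refl => exact hcr
    | @tail x y _ hxy ih =>
      obtain ⟨hx, hy, hadj⟩ := hxy
      by_contra! hlt
      obtain ⟨hxr, hyr, hcol⟩ : x.1 = r ∧ y.1 = r + 1 ∧ x.2 = y.2 := by
        simp only [Adj] at hadj
        omega
      subst hxr
      exact hcross x.2 hx (hyr ▸ hcol ▸ hy)
  exact hrd.not_ge (reachable_le d (hS c hc d hd))

theorem exists_parts_lt_iff (hne : (P.skew Q).Nonempty) (hconn : IsConnectedSet (P.skew Q)) :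
    ∃ i m, i ≤ m ∧ ∀ r, Q.parts r < P.parts r ↔ i ≤ r ∧ r ≤ m := by
  let rows : Set ℕ := {r | Q.parts r < P.parts r}
  have rows_nonempty : rows.Nonempty := by
    obtain ⟨c, hc⟩ := hne
    exact ⟨c.1, (mem_skew.1 hc).1.trans_lt (mem_skew.1 hc).2⟩
  have rows_bddAbove : BddAbove rows := by
    obtain ⟨N, hN⟩ := P.eventually_zero
    refine ⟨N, fun r hr ↦ ?_⟩
    by_contra! hlt
    exact Nat.not_lt_zero _ ((hN r hlt.le) ▸ hr : Q.parts r < 0)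
  have first_mem : Q.parts (sInf rows) < P.parts (sInf rows) := Nat.sInf_mem rows_nonempty
  have last_mem : Q.parts (sSup rows) < P.parts (sSup rows) :=
    Nat.sSup_mem rows_nonempty rows_bddAbove
  refine ⟨sInf rows, sSup rows, Nat.sInf_le last_mem, fun r ↦
    ⟨fun hr ↦ ⟨Nat.sInf_le hr, le_csSup rows_bddAbove hr⟩, fun ⟨hir, hrm⟩ ↦ ?_⟩⟩
  rcases hrm.lt_or_eq with hrm | rfl
  · obtain ⟨j, hj, -⟩ := exists_mem_succ_mem_of_isConnectedSet hconn
      (mem_skew.2 ⟨le_rfl, first_mem⟩) (mem_skew.2 ⟨le_rfl, last_mem⟩) hir hrm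
    exact (mem_skew.1 hj).1.trans_lt (mem_skew.1 hj).2
  · exact last_mem

theorem parts_add_one_eq_of_isConnectedSet (hconn : IsConnectedSet (P.skew Q))
    (hsq : NoSquare (P.skew Q)) {r : ℕ} (hi : Q.parts i < P.parts i) (hm : Q.parts m < P.parts m)
    (hir : i ≤ r) (hrm : r < m) : Q.parts r + 1 = P.parts (r + 1) := by
  obtain ⟨j, hj, hj'⟩ := exists_mem_succ_mem_of_isConnectedSet hconn
    (mem_skew.2 ⟨le_rfl, hi⟩) (mem_skew.2 ⟨le_rfl, hm⟩) hir hrm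
  simp only [mem_skew] at hj hj'
  have := P.antitone (Nat.le_add_right r 1)
  have := Q.antitone (Nat.le_add_right r 1)
  by_contra hne
  refine hsq ⟨r, Q.parts r, ?_⟩
  simp only [mem_skew]
  omega

theorem IsRimHook.exists_isBeadMove (h : IsRimHook P Q t) : ∃ i m, IsBeadMove P Q t i m := by
  obtain ⟨hle, hne, hconn, hsq, hcard⟩ := h
  obtain ⟨i, m, him, hrows⟩ := exists_parts_lt_iff hne hconn
  have hsucc (r : ℕ) (hir : i ≤ r) (hrm : r < m) : Q.parts r + 1 = P.parts (r + 1) :=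
    parts_add_one_eq_of_isConnectedSet hconn hsq ((hrows i).2 ⟨le_rfl, him⟩)
      ((hrows m).2 ⟨him, le_rfl⟩) hir hrm
  have hout {r : ℕ} (hr : ¬ (i ≤ r ∧ r ≤ m)) : Q.parts r = P.parts r :=
    (hle r).antisymm (not_lt.1 (mt (hrows r).1 hr))
  have hsum := sum_tsub_add_eq_of_succ him hsucc hle
  rw [← ncard_skew hrows, hcard] at hsum
  refine ⟨i, m, him, fun r hr ↦ ?_, fun r hir hrm ↦ ?_, ?_, fun r hr ↦ ?_⟩ <;> simp only [zpos]
  · rw [hout (by omega)]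
  · have := hsucc r hir hrm
    omega
  · omega
  · rw [hout (by omega)]

/-- The cells `c` and `d` are joined by a path of edge-adjacent cells of `S`. -/
def JoinedIn (S : Set (ℕ × ℕ)) (c d : ℕ × ℕ) : Prop :=
  Relation.ReflTransGen (fun x y ↦ x ∈ S ∧ y ∈ S ∧ Adj x y) c d

theorem JoinedIn.symm {S : Set (ℕ × ℕ)} {c d : ℕ × ℕ} (h : JoinedIn S c d) : JoinedIn S d c :=
  have : Std.Symm fun x y ↦ x ∈ S ∧ y ∈ S ∧ Adj x y :=
    ⟨fun x y ⟨hx, hy, hadj⟩ ↦ ⟨hy, hx, by simp only [Adj] at hadj ⊢; omega⟩⟩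
  Relation.ReflTransGen.stdSymm.symm _ _ h

theorem joinedIn_skew_of_row {r j j' : ℕ} (hj : Q.parts r ≤ j) (hjj' : j ≤ j')
    (hj' : j' < P.parts r) : JoinedIn (P.skew Q) (r, j) (r, j') := by
  induction j', hjj' using Nat.le_induction with
  | base => exact .refl
  | succ j' hjj' ih =>
    exact (ih (by omega)).tail ⟨mem_skew.2 ⟨hj.trans hjj', Nat.lt_of_succ_lt hj'⟩,
      mem_skew.2 ⟨by omega, hj'⟩, .inl ⟨rfl, .inl rfl⟩⟩

namespace IsBeadMove

theorem joinedIn_skew_first (h : IsBeadMove P Q t i m) (ht : 0 < t) {r : ℕ} (hir : i ≤ r)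
    (hrm : r ≤ m) : JoinedIn (P.skew Q) (i, Q.parts i) (r, Q.parts r) := by
  induction r, hir using Nat.le_induction with
  | base => exact .refl
  | succ r hir ih =>
    have hsucc := h.parts_add_one_eq hir hrm
    have hQ := Q.antitone (Nat.le_add_right r 1)
    have hdown : JoinedIn (P.skew Q) (r, Q.parts r) (r + 1, Q.parts r) :=
      .single ⟨mem_skew.2 ⟨le_rfl, (h.parts_lt_iff ht r).2 ⟨hir, by omega⟩⟩,
        mem_skew.2 ⟨hQ, by omega⟩, .inr ⟨rfl, .inl rfl⟩⟩
    exact ((ih (by omega)).trans hdown).trans (joinedIn_skew_of_row le_rfl hQ (by omega)).symm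

theorem isConnectedSet_skew (h : IsBeadMove P Q t i m) (ht : 0 < t) :
    IsConnectedSet (P.skew Q) := by
  have joined_first (c : ℕ × ℕ) (hc : c ∈ P.skew Q) : JoinedIn (P.skew Q) (i, Q.parts i) c := by
    obtain ⟨hQ, hP⟩ := mem_skew.1 hc
    obtain ⟨hir, hrm⟩ := (h.parts_lt_iff ht c.1).1 (hQ.trans_lt hP)
    exact (h.joinedIn_skew_first ht hir hrm).trans (joinedIn_skew_of_row le_rfl hQ hP)
  exact fun c hc d hd ↦ (joined_first c hc).symm.trans (joined_first d hd)

theorem noSquare_skew (h : IsBeadMove P Q t i m) (ht : 0 < t) : NoSquare (P.skew Q) := by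
  rintro ⟨r, j, h₁, h₂, -, h₄⟩
  rw [mem_skew] at h₁ h₂ h₄
  have := (h.parts_lt_iff ht r).1 (by omega)
  have := (h.parts_lt_iff ht (r + 1)).1 (by omega)
  have := h.parts_add_one_eq (r := r) (by omega) (by omega)
  omega

theorem isRimHook (h : IsBeadMove P Q t i m) (ht : 0 < t) : IsRimHook P Q t := by
  refine ⟨h.parts_le ht, ⟨(i, Q.parts i), mem_skew.2 ⟨le_rfl, (h.parts_lt_iff ht i).2
    ⟨le_rfl, h.le⟩⟩⟩, h.isConnectedSet_skew ht, h.noSquare_skew ht, ?_⟩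
  have := sum_tsub_add_eq_of_succ h.le (fun r ↦ h.parts_add_one_eq) (h.parts_le ht)
  have := h.parts_last_add
  rw [ncard_skew (h.parts_lt_iff ht)]
  omega

end IsBeadMove

theorem isStep_iff_exists_isBeadMove (ht : 0 < t) :
    IsStep P Q t ↔ ∃ i m, IsBeadMove P Q t i m := by
  constructor
  · rintro (⟨rfl, -⟩ | ⟨-, h⟩)
    · exact absurd ht (lt_irrefl 0)
    · exact h.exists_isBeadMove
  · exact fun ⟨i, m, h⟩ ↦ .inr ⟨ht, h.isRimHook ht⟩

end RimHooks

section MurnaghanNakayama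

open MvPolynomial

variable {n t i m : ℕ} {P Q : Partition}

/-- The exponent vector `λ + δ`, with 0-based entries `λ_i + (n - 1 - i)`. -/
noncomputable def betaVec (n : ℕ) (P : Partition) : Fin n →₀ ℕ :=
  Finsupp.equivFunOnFinite.symm fun i ↦ P.parts i + i.rev

theorem coe_betaVec (P : Partition) (i : Fin n) : (betaVec n P i : ℤ) = zpos P i + n := by
  have := i.is_lt
  simp only [betaVec, Finsupp.equivFunOnFinite_symm_apply_apply, Fin.val_rev, zpos]
  omega

namespace IsBeadMove

theorem last_lt (h : IsBeadMove P Q t i m) (ht : 0 < t) (hP : ∀ r, n ≤ r → P.parts r = 0) :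
    m < n := by
  by_contra! hnm
  exact Nat.not_lt_zero _ (hP m hnm ▸ (h.parts_lt_iff ht m).2 ⟨h.le, le_rfl⟩)

theorem le_betaVec {i : Fin n} (h : IsBeadMove P Q t i m) (hm : m < n) : t ≤ betaVec n P i := by
  have := h.zpos_last
  have := coe_betaVec P i
  simp only [zpos] at *
  omega

theorem betaVec_eq {i m : Fin n} (h : IsBeadMove P Q t i m) (r : Fin n) :
    betaVec n Q r = (betaVec n P - Finsupp.single i t) (Fin.cycleIcc i m r) := by
  have : NeZero n := ⟨r.pos.ne'⟩
  have ht_le := h.le_betaVec m.is_lt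
  have him : i ≤ m := h.le
  rw [← Nat.cast_inj (R := ℤ), coe_betaVec, Finsupp.tsub_apply]
  rcases lt_or_ge r i with hri | hir
  · rw [Fin.cycleIcc_of_lt hri, Finsupp.single_eq_of_ne hri.ne, tsub_zero, coe_betaVec,
      h.zpos_of_lt r hri]
  rcases lt_trichotomy r m with hrm | rfl | hmr
  · have hval : ((r + 1 : Fin n) : ℕ) = r + 1 := Fin.val_add_one_of_lt' (by omega)
    have hne : r + 1 ≠ i := fun heq ↦ by
      rw [← heq, Fin.le_def, hval] at hir
      omega
    rw [Fin.cycleIcc_of_ge_of_lt hir hrm, Finsupp.single_eq_of_ne hne, tsub_zero, coe_betaVec,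
      hval, h.zpos_of_mem_Ico r hir hrm]
  · rw [Fin.cycleIcc_of_last him, Finsupp.single_eq_same, Nat.cast_sub ht_le, coe_betaVec,
      h.zpos_last]
    ring
  · rw [Fin.cycleIcc_of_gt hmr, Finsupp.single_eq_of_ne (him.trans_lt hmr).ne', tsub_zero,
      coe_betaVec, h.zpos_of_gt r hmr]

theorem coeff_betaVec_sub_single {R : Type*} [CommRing R] {f : MvPolynomial (Fin n) R}
    {i : Fin n} (h : IsBeadMove P Q t i m) (hm : m < n) (ht : 0 < t) (hf : IsAlternating f) :
    coeff (betaVec n P - Finsupp.single i t) f =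
      (-1) ^ (rowCount (P.skew Q) - 1) * coeff (betaVec n Q) f := by
  have h' : IsBeadMove P Q t i (⟨m, hm⟩ : Fin n) := h
  have hrows : rowCount (P.skew Q) - 1 = m - i := by
    rw [rowCount_skew (h.parts_lt_iff ht)]
    omega
  rw [hf.coeff_eq _ h'.betaVec_eq, Fin.sign_cycleIcc_of_le h'.le, hrows, Units.smul_def,
    zsmul_eq_mul, ← mul_assoc]
  push_cast
  rw [← mul_pow, neg_mul_neg, one_mul, one_pow, one_mul]

end IsBeadMove

theorem exists_equiv_isStep (ht : 0 < t) (hP : ∀ r, n ≤ r → P.parts r = 0) :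
    ∃ e : {i : Fin n // ¬ isZeroAt P (zpos P i - t)} ≃ {Q // IsStep P Q t},
      ∀ i, ∃ m < n, IsBeadMove P (e i).1 t i.1 m := by
  choose Q m hQ using fun i : {i : Fin n // ¬ isZeroAt P (zpos P i - t)} ↦
    exists_isBeadMove ht i.2
  let toStep (i) : {Q // IsStep P Q t} :=
    ⟨Q i, (isStep_iff_exists_isBeadMove ht).2 ⟨i.1, m i, hQ i⟩⟩
  refine ⟨Equiv.ofBijective toStep ⟨fun i j hij ↦ ?_, fun ⟨Q', hQ'⟩ ↦ ?_⟩,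
    fun i ↦ ⟨m i, (hQ i).last_lt ht hP, hQ i⟩⟩
  · have hQij : Q i = Q j := congrArg Subtype.val hij
    exact Subtype.ext (Fin.ext ((hQij ▸ hQ i).row_unique (hQ j) ht))
  · obtain ⟨i, m', h⟩ := (isStep_iff_exists_isBeadMove ht).1 hQ'
    let i' : Fin n := ⟨i, h.le.trans_lt (h.last_lt ht hP)⟩
    exact ⟨⟨i', h.not_isZeroAt ht⟩, Subtype.ext ((hQ _).unique h)⟩

theorem finite_isStep (ht : 0 < t) (P : Partition) : Finite {Q // IsStep P Q t} := by
  obtain ⟨n, hn⟩ := P.eventually_zero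
  obtain ⟨e, -⟩ := exists_equiv_isStep ht hn
  exact Finite.of_equiv _ e

theorem coeff_betaVec_sub_single_eq_zero {R : Type*} [CommRing R] [NoZeroDivisors R] [CharZero R]
    {f : MvPolynomial (Fin n) R} (hf : IsAlternating f) (hP : ∀ r, n ≤ r → P.parts r = 0)
    {i : Fin n} (ht : 0 < t) (ht_le : t ≤ betaVec n P i) (hi : isZeroAt P (zpos P i - t)) :
    coeff (betaVec n P - Finsupp.single i t) f = 0 := by
  obtain ⟨j, hj⟩ := hi
  have hβi := coe_betaVec P i
  have hjn : j < n := by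
    by_contra! hnj
    have : zpos P j = -j - 1 := by simp [zpos, hP j hnj]
    omega
  have hβj := coe_betaVec P ⟨j, hjn⟩
  have hij : i ≠ ⟨j, hjn⟩ := fun h ↦ by
    rw [show j = i from congrArg Fin.val h.symm] at hj
    omega
  refine hf.coeff_eq_zero hij ?_
  rw [Finsupp.tsub_apply, Finsupp.tsub_apply, Finsupp.single_eq_same,
    Finsupp.single_eq_of_ne hij.symm]
  simp only at hβj
  omega

theorem coeff_betaVec_mul_psum {R : Type*} [CommRing R] [NoZeroDivisors R] [CharZero R]
    {f : MvPolynomial (Fin n) R} (hf : IsAlternating f) (ht : 0 < t)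
    (hP : ∀ r, n ≤ r → P.parts r = 0) :
    coeff (betaVec n P) (f * psum (Fin n) R t) =
      ∑ᶠ Q : {Q // IsStep P Q t},
        (-1) ^ (rowCount (P.skew Q.1) - 1) * coeff (betaVec n Q.1) f := by
  classical
  obtain ⟨e, he⟩ := exists_equiv_isStep ht hP
  let term (i : Fin n) : R :=
    if t ≤ betaVec n P i then coeff (betaVec n P - Finsupp.single i t) f else 0
  have term_eq_zero (i : Fin n) (hi : isZeroAt P (zpos P i - t)) : term i = 0 := by
    by_cases hti : t ≤ betaVec n P i
    · exact (if_pos hti).trans (coeff_betaVec_sub_single_eq_zero hf hP ht hti hi)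
    · exact if_neg hti
  have term_eq (i : {i : Fin n // ¬ isZeroAt P (zpos P i - t)}) :
      term i = (-1) ^ (rowCount (P.skew (e i).1) - 1) * coeff (betaVec n (e i).1) f := by
    obtain ⟨m, hm, h⟩ := he i
    exact (if_pos (h.le_betaVec hm)).trans (h.coeff_betaVec_sub_single hm ht hf)
  calc coeff (betaVec n P) (f * psum (Fin n) R t)
    _ = ∑ᶠ i, term i := by rw [coeff_mul_psum, finsum_eq_sum_of_fintype]
    _ = ∑ᶠ i : {i : Fin n // ¬ isZeroAt P (zpos P i - t)}, term i := by
      rw [finsum_subtype_eq_finsum_cond (f := term)]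
      refine finsum_congr fun i ↦ ?_
      rw [finsum_eq_if]
      split_ifs with hi
      · exact term_eq_zero i hi
      · rfl
    _ = _ := by rw [← finsum_comp_equiv e, finsum_congr term_eq]

end MurnaghanNakayama

section Chains

open MvPolynomial

variable {l n : ℕ} {P : Partition}

/-- A rim hook tableau whose type is given as a vector rather than a list, so that one can
induct on its length. -/
structure Chain (ν : Fin l → ℕ) (P : Partition) : Type where
  shape : Fin (l + 1) → Partition
  shape_zero : shape 0 = Partition.empty
  shape_last : shape (Fin.last l) = P
  step : ∀ j : Fin l, IsStep (shape j.succ) (shape j.castSucc) (ν j)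

namespace Chain

@[ext]
theorem ext {ν : Fin l → ℕ} {c d : Chain ν P} (h : c.shape = d.shape) : c = d := by
  cases c
  cases d
  congr

/-- The sum of the heights of the hooks of a chain. -/
noncomputable def height {ν : Fin l → ℕ} (c : Chain ν P) : ℕ :=
  ∑ j : Fin l, (rowCount ((c.shape j.succ).skew (c.shape j.castSucc)) - 1)

theorem sigma_ext {ν : Fin l → ℕ} {p : Partition → Prop}
    {x y : Σ Q : {Q // p Q}, Chain ν Q.1} (h : x.2.shape = y.2.shape) : x = y := by
  obtain ⟨⟨Q, hQ⟩, c⟩ := x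
  obtain ⟨⟨Q', hQ'⟩, c'⟩ := y
  obtain rfl : Q = Q' := (c.shape_last.symm.trans (congrFun h _)).trans c'.shape_last
  obtain rfl : c = c' := Chain.ext h
  rfl

/-- Splitting off the last hook of a chain. -/
def equivSigma (ν : Fin (l + 1) → ℕ) (P : Partition) :
    Chain ν P ≃
      Σ Q : {Q // IsStep P Q (ν (Fin.last l))}, Chain (fun j : Fin l ↦ ν j.castSucc) Q.1 where
  toFun c :=
    ⟨⟨c.shape (Fin.last l).castSucc, by simpa [c.shape_last] using c.step (Fin.last l)⟩,
      ⟨fun j ↦ c.shape j.castSucc, c.shape_zero, rfl, fun j ↦ c.step j.castSucc⟩⟩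
  invFun x :=
    { shape := Fin.snoc (α := fun _ ↦ Partition) x.2.shape P
      shape_zero := (Fin.snoc_castSucc (α := fun _ ↦ Partition) _ _ 0).trans x.2.shape_zero
      shape_last := Fin.snoc_last _ _
      step := Fin.lastCases
        (by simpa only [Fin.succ_last, Fin.snoc_last, Fin.snoc_castSucc, x.2.shape_last]
          using x.1.2)
        fun j ↦ by simpa only [Fin.succ_castSucc, Fin.snoc_castSucc] using x.2.step j }
  left_inv c := by
    ext1
    funext j
    cases j using Fin.lastCases with
    | last => exact (Fin.snoc_last (α := fun _ ↦ Partition) _ _).trans c.shape_last.symm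
    | cast j => exact Fin.snoc_castSucc (α := fun _ ↦ Partition) _ _ _
  right_inv x := sigma_ext (funext fun j ↦ Fin.snoc_castSucc (α := fun _ ↦ Partition) _ _ _)

theorem height_eq_add (ν : Fin (l + 1) → ℕ) (P : Partition) (c : Chain ν P) :
    c.height = (equivSigma ν P c).2.height +
      (rowCount (P.skew (equivSigma ν P c).1.1) - 1) := by
  rw [height, Fin.sum_univ_castSucc, Fin.succ_last, c.shape_last]
  rfl

instance (ν : Fin 0 → ℕ) (P : Partition) : Subsingleton (Chain ν P) where
  allEq c d := by
    ext1
    funext j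
    rw [Fin.fin_one_eq_zero j, c.shape_zero, d.shape_zero]

theorem finite {ν : Fin l → ℕ} (hν : ∀ j, 0 < ν j) (P : Partition) : Finite (Chain ν P) := by
  induction l generalizing P with
  | zero => infer_instance
  | succ l ih =>
    have := finite_isStep (hν (Fin.last l)) P
    have := fun Q ↦ ih (fun j ↦ hν j.castSucc) Q
    exact Finite.of_equiv _ (equivSigma ν P).symm

/-- The number of chains of type `ν` and shape `P`, each counted with the sign given by its
height. -/
noncomputable def signedCount (ν : Fin l → ℕ) (P : Partition) : ℤ :=
  ∑ᶠ c : Chain ν P, (-1) ^ c.height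

theorem signedCount_succ {ν : Fin (l + 1) → ℕ} (hν : ∀ j, 0 < ν j) (P : Partition) :
    signedCount ν P = ∑ᶠ Q : {Q // IsStep P Q (ν (Fin.last l))},
      (-1) ^ (rowCount (P.skew Q.1) - 1) * signedCount (fun j : Fin l ↦ ν j.castSucc) Q.1 := by
  have := finite_isStep (hν (Fin.last l)) P
  have := fun Q ↦ finite (fun j : Fin l ↦ hν j.castSucc) Q
  have := Fintype.ofFinite {Q // IsStep P Q (ν (Fin.last l))}
  have := fun Q ↦ Fintype.ofFinite (Chain (fun j : Fin l ↦ ν j.castSucc) Q)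
  simp only [signedCount]
  rw [← finsum_comp_equiv (equivSigma ν P).symm]
  simp only [finsum_eq_sum_of_fintype, Finset.mul_sum, Fintype.sum_sigma, height_eq_add,
    pow_add]
  refine Finset.sum_congr rfl fun Q _ ↦ Finset.sum_congr rfl fun c _ ↦ ?_
  rw [Equiv.apply_symm_apply, mul_comm]

end Chain

theorem coeff_betaVec_empty_alternant (R : Type*) [CommRing R] :
    coeff (betaVec n Partition.empty) (alternant R fun i : Fin n ↦ (i.rev : ℕ)) = 1 := by
  have h (i : Fin n) : betaVec n Partition.empty ((1 : Equiv.Perm (Fin n)) i) = i.rev := by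
    simp [betaVec, Partition.empty]
  rw [coeff_alternant, det_indicatorMatrix_eq_sign (fun i j hij ↦ ?_) h]
  · simp
  · exact Fin.rev_injective (Fin.ext hij)

theorem coeff_betaVec_alternant_of_ne_empty {R : Type*} [CommRing R]
    (hP : ∀ r, n ≤ r → P.parts r = 0) (hne : P ≠ Partition.empty) :
    coeff (betaVec n P) (alternant R fun i : Fin n ↦ (i.rev : ℕ)) = 0 := by
  have h₀ : 0 < P.parts 0 := by
    by_contra! h
    have hparts : P.parts = Partition.empty.parts :=
      funext fun r ↦ Nat.le_zero.1 ((P.antitone r.zero_le).trans h)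
    cases P
    exact hne (by simpa [Partition.empty] using hparts)
  have hn : 0 < n := by
    by_contra! h
    exact h₀.ne' (hP 0 h)
  have h_large (i : Fin n) : (i.rev : ℕ) ≠ betaVec n P ⟨0, hn⟩ := by
    simp only [betaVec, Finsupp.equivFunOnFinite_symm_apply_apply, Fin.val_rev]
    omega
  rw [coeff_alternant]
  exact Matrix.det_eq_zero_of_column_eq_zero ⟨0, hn⟩ fun i ↦ if_neg (h_large i)

theorem IsStep.parts_le {Q : Partition} {t : ℕ} (h : IsStep P Q t) (r : ℕ) :
    Q.parts r ≤ P.parts r := by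
  obtain ⟨-, rfl⟩ | ⟨-, hPQ⟩ := h
  · exact le_rfl
  · exact hPQ.1 r

theorem Chain.signedCount_eq_coeff {ν : Fin l → ℕ} (hν : ∀ j, 0 < ν j)
    (hP : ∀ r, n ≤ r → P.parts r = 0) :
    signedCount ν P = coeff (betaVec n P)
      (alternant ℤ (fun i : Fin n ↦ (i.rev : ℕ)) * ∏ j, psum (Fin n) ℤ (ν j)) := by
  induction l generalizing P with
  | zero =>
    rw [Finset.univ_eq_empty, Finset.prod_empty, mul_one, signedCount]
    by_cases h : P = Partition.empty
    · subst h
      let c : Chain ν Partition.empty := ⟨fun _ ↦ Partition.empty, rfl, rfl, fun j ↦ j.elim0⟩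
      have : Unique (Chain ν Partition.empty) := uniqueOfSubsingleton c
      rw [finsum_unique, height, Finset.univ_eq_empty, Finset.sum_empty, pow_zero,
        coeff_betaVec_empty_alternant]
    · have : IsEmpty (Chain ν P) := ⟨fun c ↦ h (c.shape_last.symm.trans c.shape_zero)⟩
      rw [finsum_of_isEmpty, coeff_betaVec_alternant_of_ne_empty hP h]
  | succ l ih =>
    have h_symm : (∏ j : Fin l, psum (Fin n) ℤ (ν j.castSucc)).IsSymmetric :=
      prod_mem (S := symmetricSubalgebra (Fin n) ℤ) fun j _ ↦ psum_isSymmetric _ _ _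
    rw [signedCount_succ hν, Fin.prod_univ_castSucc, ← mul_assoc,
      coeff_betaVec_mul_psum ((isAlternating_alternant _).mul_isSymmetric h_symm) (hν _) hP]
    refine finsum_congr fun Q ↦ ?_
    rw [ih (fun j ↦ hν j.castSucc) fun r hr ↦ Nat.le_zero.1 (hP r hr ▸ Q.2.parts_le r)]

theorem chiAux_eq_signedCount (P : Partition) (μ : List ℕ) :
    chiAux P μ = Chain.signedCount μ.get P :=
  let e : RHT P μ ≃ Chain μ.get P :=
    { toFun := fun T ↦ ⟨T.chain, T.chain_zero, T.chain_last, T.step⟩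
      invFun := fun c ↦ ⟨c.shape, c.shape_zero, c.shape_last, c.step⟩ }
  finsum_comp_equiv e (f := fun c ↦ (-1) ^ c.height)

theorem chi_eq_coeff {μ : Multiset ℕ} (hμ : ∀ x ∈ μ, 0 < x) (hP : ∀ r, n ≤ r → P.parts r = 0) :
    chi P μ = coeff (betaVec n P)
      (alternant ℤ (fun i : Fin n ↦ (i.rev : ℕ)) * (μ.map (psum (Fin n) ℤ)).prod) := by
  have h_coe : (typeList μ : Multiset ℕ) = μ := by
    rw [typeList, Multiset.coe_reverse, Multiset.sort_eq]
  have h_pos (j : Fin (typeList μ).length) : 0 < (typeList μ).get j :=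
    hμ _ (Multiset.mem_of_le h_coe.le (Multiset.mem_coe.2 (List.get_mem _ _)))
  have h_prod : ∏ j, psum (Fin n) ℤ ((typeList μ).get j) = (μ.map (psum (Fin n) ℤ)).prod := by
    rw [← congrArg Multiset.prod (congrArg (Multiset.map _) h_coe), Multiset.map_coe,
      Multiset.prod_coe]
    exact Fin.prod_univ_fun_getElem _ _
  rw [chi, chiAux_eq_signedCount, Chain.signedCount_eq_coeff h_pos hP, h_prod]

end Chains

section Determinant

open MvPolynomial

variable {k n p : ℕ} {P : Partition}

/-- The number `ε₁(λ)`. -/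
noncomputable def eps1 (k p : ℕ) (P : Partition) : ℚ :=
  ∑ μ : Nat.Partition p, (1 / (zpart μ.parts : ℚ)) * (chi P (μ.parts.map fun x ↦ k * x) : ℚ)

theorem degree_betaVec (hP : ∀ r, n ≤ r → P.parts r = 0) :
    (betaVec n P).degree = ∑ i : Fin n, (i.rev : ℕ) + P.size := by
  have h_support : Function.support P.parts ⊆ Finset.range n := fun r hr ↦
    Finset.mem_coe.2 (Finset.mem_range.2 (not_le.1 (mt (hP r) hr)))
  rw [Finsupp.degree_eq_sum, Partition.size, finsum_eq_sum_of_support_subset _ h_support,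
    ← Fin.sum_univ_eq_sum_range, add_comm, ← Finset.sum_add_distrib]
  rfl

theorem eps1_eq_coeff (hk : 0 < k) (hP : ∀ r, n ≤ r → P.parts r = 0) :
    eps1 k p P = coeff (betaVec n P)
      (alternant ℚ (fun i : Fin n ↦ (i.rev : ℕ)) * expand k (hsymm (Fin n) ℚ p)) := by
  have h_chi (μ : Nat.Partition p) : (chi P (μ.parts.map fun x ↦ k * x) : ℚ) =
      coeff (betaVec n P) (alternant ℚ (fun i : Fin n ↦ (i.rev : ℕ)) *
        (μ.parts.map fun x ↦ psum (Fin n) ℚ (k * x)).prod) := by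
    have h_pos : ∀ x ∈ μ.parts.map fun x ↦ k * x, 0 < x := by
      simp only [Multiset.mem_map, forall_exists_index, and_imp, forall_apply_eq_imp_iff₂]
      exact fun x hx ↦ Nat.mul_pos hk (μ.parts_pos hx)
    rw [chi_eq_coeff h_pos hP, ← eq_intCast (Int.castRingHom ℚ), ← coeff_map, map_mul,
      map_alternant, map_multiset_prod, Multiset.map_map, Multiset.map_map]
    simp only [Function.comp_def, psum, map_sum, map_pow, map_X]
  have h_index : expand k (hsymm (Fin n) ℚ p) =
      cycleIndex (fun j ↦ psum (Fin n) ℚ (k * j)) p := by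
    rw [← cycleIndex_psum, map_cycleIndex (expand k)]
    simp only [expand_psum]
  rw [eps1, h_index, cycleIndex, Finset.mul_sum, coeff_sum]
  refine Finset.sum_congr rfl fun μ _ ↦ ?_
  rw [h_chi, mul_smul_comm, coeff_smul, smul_eq_mul]

theorem eps1_eq_det (hk : 0 < k) (hP : ∀ r, n ≤ r → P.parts r = 0) (hsize : P.size = k * p) :
    eps1 k p P = (indicatorMatrix ℚ fun i j : Fin n ↦
      (i.rev : ℕ) ≤ betaVec n P j ∧ k ∣ betaVec n P j - i.rev).det := by
  rw [eps1_eq_coeff hk hP, coeff_alternant_mul_expand_hsymm _ hk (by rw [degree_betaVec hP, hsize])]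

theorem det_indicatorMatrix_le_and_dvd_sub_eq_zero {R σ : Type*} [CommRing R] [Fintype σ]
    [DecidableEq σ] {e γ : σ → ℕ} (hk : 0 < k) (hγ : ∀ j, 0 < γ j) {i i' : σ} (hi : e i = 0)
    (hi' : e i' = k) : (indicatorMatrix R fun i j ↦ e i ≤ γ j ∧ k ∣ γ j - e i).det = 0 := by
  have hne : i ≠ i' := by
    rintro rfl
    exact hk.ne (hi.symm.trans hi')
  refine det_indicatorMatrix_eq_zero_of_row_iff hne fun j ↦ ?_
  rw [hi, hi']
  constructor
  · rintro ⟨-, hdvd⟩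
    exact ⟨Nat.le_of_dvd (hγ j) hdvd, Nat.dvd_sub hdvd dvd_rfl⟩
  · rintro ⟨hle, hdvd⟩
    exact ⟨Nat.zero_le _, (Nat.dvd_sub_iff_left hle dvd_rfl).1 hdvd⟩

theorem eps1_eq_zero_of_parts_ne_zero (hk : 0 < k) (hsize : P.size = k * p)
    (h : ∃ r, k ≤ r ∧ P.parts r ≠ 0) : eps1 k p P = 0 := by
  classical
  obtain ⟨r, hkr, hr⟩ := h
  let n := Nat.find P.eventually_zero
  have hP : ∀ r, n ≤ r → P.parts r = 0 := Nat.find_spec P.eventually_zero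
  have hkn : k < n := hkr.trans_lt (not_le.1 (mt (hP r) hr))
  have h_pos (j : Fin n) : 0 < betaVec n P j := by
    have h_parts : 0 < P.parts j := Nat.pos_of_ne_zero fun hj ↦
      Nat.find_min P.eventually_zero j.is_lt fun r hr ↦ Nat.le_zero.1 (hj ▸ P.antitone hr)
    exact Nat.add_pos_left h_parts _
  rw [eps1_eq_det hk hP hsize]
  exact det_indicatorMatrix_le_and_dvd_sub_eq_zero hk h_pos
    (i := Fin.rev ⟨0, by omega⟩) (i' := Fin.rev ⟨k, hkn⟩) (by rw [Fin.rev_rev])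
    (by rw [Fin.rev_rev])

theorem le_and_dvd_sub_iff_natCast_eq {e b : ℕ} (he : e < k) :
    e ≤ b ∧ k ∣ b - e ↔ (e : ZMod k) = b := by
  rw [ZMod.natCast_eq_natCast_iff]
  constructor
  · rintro ⟨hle, hdvd⟩
    exact (Nat.modEq_iff_dvd' hle).2 hdvd
  · intro hmod
    have hle : e ≤ b := Nat.mod_eq_of_lt he ▸ hmod ▸ Nat.mod_le b k
    exact ⟨hle, (Nat.modEq_iff_dvd' hle).1 hmod⟩

theorem eps1_eq_det_zmod (hk : 0 < k) (hP : ∀ r, k ≤ r → P.parts r = 0) (hsize : P.size = k * p) :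
    eps1 k p P = (indicatorMatrix ℚ fun i j : Fin k ↦
      ((i.rev : ℕ) : ZMod k) = (betaVec k P j : ZMod k)).det := by
  simp only [eps1_eq_det hk hP hsize, le_and_dvd_sub_iff_natCast_eq (Fin.is_lt _)]

theorem natCast_rev_injective : Function.Injective fun i : Fin k ↦ ((i.rev : ℕ) : ZMod k) :=
  fun _ _ hij ↦ Fin.rev_injective <| Fin.ext <|
    ((ZMod.natCast_eq_natCast_iff _ _ _).1 hij).eq_of_lt_of_lt (Fin.is_lt _) (Fin.is_lt _)

theorem intCast_parts_add_sub_sub (i : Fin k) :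
    ((P.parts i + k - 1 - (i : ℕ) : ℤ) : ZMod k) = betaVec k P i := by
  rw [← Int.cast_natCast (betaVec k P i), coe_betaVec, zpos]
  congr 1
  ring

theorem intCast_sub_sub (i : Fin k) : ((k - 1 - (i : ℕ) : ℤ) : ZMod k) = (i.rev : ℕ) := by
  rw [← Int.cast_natCast (i.rev : ℕ), Fin.val_rev]
  congr 1
  omega

theorem exists_perm_apply_eq {α β : Type*} [Finite β] (hcard : Nat.card α = Nat.card β)
    {r c : α → β} (hr : Function.Injective r) (hc : Function.Injective c) :
    ∃ τ : Equiv.Perm α, ∀ i, r (τ i) = c i := by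
  let er := Equiv.ofBijective r (hr.bijective_of_nat_card_le hcard.ge)
  let ec := Equiv.ofBijective c (hc.bijective_of_nat_card_le hcard.ge)
  exact ⟨ec.trans er.symm, fun i ↦ er.apply_symm_apply (ec i)⟩

end Determinant

/-- for `λ ⊢ kp` set `ε₁(λ) := Σ_{μ ⊢ p} (1/z_μ)·χ^λ_{kμ}`.
Then `ε₁(λ) ≠ 0` iff `λ` has at most `k` nonzero parts and the numbers
`λᵢ + k − i` (`1 ≤ i ≤ k`) have `k` distinct residues mod `k`; in that case
`ε₁(λ)` is the sign of the (unique) `τ ∈ S_k` with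
`λ_{τ(i)} + k − τ(i) ≡ k − i (mod k)` for all `i`. (Here parts are 0-indexed:
`λᵢ = P.parts (i−1)`.) -/
theorem eps1_ne_zero_iff_and_value (k p : ℕ) (hk : 2 ≤ k) (P : Partition)
    (hP : P.size = k * p) :
    ((∑ μ : Nat.Partition p, (1 / (zpart μ.parts : ℚ)) *
        (chi P (μ.parts.map fun x => k * x) : ℚ)) ≠ 0 ↔
      (∀ i : ℕ, k ≤ i → P.parts i = 0) ∧
        Function.Injective fun i : Fin k =>
          (((P.parts (i : ℕ) : ℤ) + (k : ℤ) - 1 - ((i : ℕ) : ℤ) : ℤ) : ZMod k)) ∧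
    (∀ τ : Equiv.Perm (Fin k),
      (∀ i : ℕ, k ≤ i → P.parts i = 0) →
      (∀ i : Fin k,
        (((P.parts ((τ i : ℕ)) : ℤ) + (k : ℤ) - 1 - ((τ i : ℕ) : ℤ) : ℤ) : ZMod k) =
          (((k : ℤ) - 1 - ((i : ℕ) : ℤ) : ℤ) : ZMod k)) →
      (∑ μ : Nat.Partition p, (1 / (zpart μ.parts : ℚ)) *
          (chi P (μ.parts.map fun x => k * x) : ℚ)) =
        ((Equiv.Perm.sign τ : ℤ) : ℚ)) := by
  have hk₀ : 0 < k := by omega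
  have : NeZero k := ⟨hk₀.ne'⟩
  simp only [intCast_parts_add_sub_sub, intCast_sub_sub]
  refine ⟨⟨fun hne ↦ ?_, fun ⟨hlen, hinj⟩ ↦ ?_⟩, fun τ hlen hτ ↦ ?_⟩
  · have hlen : ∀ i, k ≤ i → P.parts i = 0 := by
      by_contra! h
      exact hne (eps1_eq_zero_of_parts_ne_zero hk₀ hP h)
    refine ⟨hlen, not_not.1 fun hinj ↦ hne ?_⟩
    exact (eps1_eq_det_zmod hk₀ hlen hP).trans (det_indicatorMatrix_eq_zero hinj)
  · obtain ⟨τ, hτ⟩ := exists_perm_apply_eq (by simp) hinj natCast_rev_injective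
    rw [← eps1, eps1_eq_det_zmod hk₀ hlen hP, det_indicatorMatrix_eq_sign natCast_rev_injective hτ]
    exact Int.cast_ne_zero.2 (Units.ne_zero _)
  · exact (eps1_eq_det_zmod hk₀ hlen hP).trans
      (det_indicatorMatrix_eq_sign natCast_rev_injective hτ)

end RimHookPaper
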